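/- Let L1 = (S1, ι1, →1) and L2 = (S2, ι2, →2) be two LTSs. Then L1 ⊑tr L2 (i.e., weaktraces(L2) ⊆ weaktraces(L1)) holds if and only if no TR-witness is reachable in the product norm(L1) ⋉ L2, where a TR-witness is a product state (U, s) with U = ∅. -/

import Mathlib

/-- A labelled transition system with states `S` and visible actions `Act`.
Transition labels are `Option Act`, where `none` plays the role of the
internal action τ and `some a` is the visible action `a ∈ Act`. -/
structure LTS (S : Type*) (Act : Type*) where
  init : S
  tr : S → Option Act → S → Prop

namespace LTS

variable {S S₁ S₂ : Type*} {Act : Type*}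

/-- The trace relation: `s ⟶ε t` iff `s = t`, and `s ⟶(σ a) t` iff
`s ⟶σ u` and `u —a→ t` for some `u`. -/
inductive Trace (L : LTS S Act) : S → List (Option Act) → S → Prop
  | nil (s : S) : Trace L s [] s
  | snoc {s u t : S} {σ : List (Option Act)} {a : Option Act} :
      Trace L s σ u → L.tr u a t → Trace L s (σ ++ [a]) t

/-- The weak transition relation `s ⇒ρ t` for `ρ ∈ Act*`. -/
inductive Weak (L : LTS S Act) : S → List Act → S → Prop
  | refl (s : S) : Weak L s [] s
  | tau {s t : S} : L.tr s none t → Weak L s [] t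
  | act {s t : S} {a : Act} : L.tr s (some a) t → Weak L s [a] t
  | comp {s u t : S} {ρ σ : List Act} :
      Weak L s ρ u → Weak L u σ t → Weak L s (ρ ++ σ) t

/-- A state is reachable iff some trace leads from the initial state to it. -/
def Reachable (L : LTS S Act) (s : S) : Prop := ∃ σ, L.Trace L.init σ s

/-- A state is stable iff it has no outgoing τ-transition. -/
def Stable (L : LTS S Act) (s : S) : Prop := ¬ ∃ t, L.tr s none t

/-- A state diverges iff there is an infinite sequence of τ-transitions from it. -/
def Diverges (L : LTS S Act) (s : S) : Prop :=
  ∃ f : ℕ → S, f 0 = s ∧ ∀ n, L.tr (f n) none (f (n + 1))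

/-- The weak traces of an LTS. -/
def weaktraces (L : LTS S Act) : Set (List Act) := {ρ | ∃ t, L.Weak L.init ρ t}

/-- The divergences of an LTS: all `ρ σ` such that `ι ⇒ρ t` for a diverging `t`. -/
def divergences (L : LTS S Act) : Set (List Act) :=
  {w | ∃ ρ σ : List Act, w = ρ ++ σ ∧ ∃ t, L.Weak L.init ρ t ∧ L.Diverges t}

/-- The refusals of a (stable) state: all sets `X` of visible actions none of
which is enabled in `s`. -/
def refusals (L : LTS S Act) (s : S) : Set (Set Act) :=
  {X | ∀ a ∈ X, ¬ ∃ t, L.tr s (some a) t}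

/-- The refusals of a set of states. -/
def refusalsSet (L : LTS S Act) (U : Set S) : Set (Set Act) :=
  {X | ∃ s ∈ U, L.Stable s ∧ X ∈ L.refusals s}

/-- The stable failures of an LTS. -/
def failures (L : LTS S Act) : Set (List Act × Set Act) :=
  {p | ∃ t, L.Weak L.init p.1 t ∧ L.Stable t ∧ p.2 ∈ L.refusals t}

/-- The failures with post-divergence details obscured. -/
def failuresBot (L : LTS S Act) : Set (List Act × Set Act) :=
  L.failures ∪ {p | p.1 ∈ L.divergences}

/-- The normal form of an LTS. -/
def norm (L : LTS S Act) : LTS (Set S) Act where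
  init := {s | L.Weak L.init [] s}
  tr U a V := ∃ b : Act, a = some b ∧ V = {t | ∃ s ∈ U, L.Weak s [b] t}

/-- The failures-divergences normal form of an LTS. -/
def normFdr (L : LTS S Act) : LTS (Set S) Act where
  init := {s | L.Weak L.init [] s}
  tr U a V := ∃ b : Act, a = some b ∧ (¬ ∃ s ∈ U, L.Diverges s) ∧
      V = {t | ∃ s ∈ U, L.Weak s [b] t}

/-- The product of two LTSs. -/
def prod (L₁ : LTS S₁ Act) (L₂ : LTS S₂ Act) : LTS (S₁ × S₂) Act where
  init := (L₁.init, L₂.init)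
  tr p a q :=
    (a = none ∧ q.1 = p.1 ∧ L₂.tr p.2 none q.2) ∨
    (∃ b : Act, a = some b ∧ L₁.tr p.1 (some b) q.1 ∧ L₂.tr p.2 (some b) q.2)

end LTS


/-- A TR-witness is a product state whose first component is the empty set. -/
def TRwitness {S₁ S₂ : Type*} (p : Set S₁ × S₂) : Prop := p.1 = ∅

/-!
A weak trace is the visible part of a trace. The normal form is deterministic and has no internal
transitions, and the product lets it follow exactly the visible part of each trace of `L₂`. Hence
the states `(U, t)` reachable in the product are those for which `t` is reached in `L₂` by a weak
trace `ρ` and `U` is the set of states reached in `L₁` by `ρ`; this set is empty if and only if `ρ`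
is not a weak trace of `L₁`.
-/

namespace LTS

section Basic

variable {S Act : Type*} {L : LTS S Act} {s t : S}

theorem trace_nil_iff : L.Trace s [] t ↔ s = t := by
  refine ⟨fun h => ?_, fun h => h ▸ .nil s⟩
  generalize hσ : ([] : List (Option Act)) = σ at h
  cases h with
  | nil => rfl
  | snoc => simp at hσ

theorem trace_append_singleton_iff {σ : List (Option Act)} {a : Option Act} :
    L.Trace s (σ ++ [a]) t ↔ ∃ u, L.Trace s σ u ∧ L.tr u a t := by
  refine ⟨fun h => ?_, fun ⟨_, hσ, ha⟩ => .snoc hσ ha⟩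
  generalize hτ : σ ++ [a] = τ at h
  cases h with
  | nil => simp at hτ
  | snoc hσ ha =>
    obtain ⟨rfl, rfl⟩ := List.append_singleton_inj.1 hτ
    exact ⟨_, hσ, ha⟩

theorem trace_append_iff {σ τ : List (Option Act)} :
    L.Trace s (σ ++ τ) t ↔ ∃ u, L.Trace s σ u ∧ L.Trace u τ t := by
  induction τ using List.reverseRecOn generalizing t with
  | nil => simp [trace_nil_iff]
  | append_singleton τ a ih =>
    simp only [← List.append_assoc, trace_append_singleton_iff, ih]
    tauto

theorem trace_singleton_iff {a : Option Act} : L.Trace s [a] t ↔ L.tr s a t := by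
  simpa [trace_nil_iff] using trace_append_singleton_iff (L := L) (s := s) (t := t) (σ := [])

theorem Trace.weak {σ : List (Option Act)} (h : L.Trace s σ t) : L.Weak s σ.reduceOption t := by
  induction h with
  | nil => exact .refl s
  | @snoc _ _ _ a _ ha ih =>
    rw [List.reduceOption_append]
    cases a with
    | none => exact .comp ih (.tau ha)
    | some a => exact .comp ih (.act ha)

theorem Weak.exists_trace {ρ : List Act} (h : L.Weak s ρ t) :
    ∃ σ, L.Trace s σ t ∧ σ.reduceOption = ρ := by
  induction h with
  | refl s => exact ⟨[], .nil s, rfl⟩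
  | tau h => exact ⟨[none], trace_singleton_iff.2 h, rfl⟩
  | @act _ _ a h => exact ⟨[some a], trace_singleton_iff.2 h, rfl⟩
  | comp _ _ ih₁ ih₂ =>
    obtain ⟨σ, hσ, rfl⟩ := ih₁
    obtain ⟨τ, hτ, rfl⟩ := ih₂
    exact ⟨σ ++ τ, trace_append_iff.2 ⟨_, hσ, hτ⟩, List.reduceOption_append σ τ⟩

theorem weak_iff_exists_trace {ρ : List Act} :
    L.Weak s ρ t ↔ ∃ σ, L.Trace s σ t ∧ σ.reduceOption = ρ :=
  ⟨Weak.exists_trace, fun ⟨_, hσ, hρ⟩ => hρ ▸ hσ.weak⟩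

theorem weak_append_iff {ρ σ : List Act} :
    L.Weak s (ρ ++ σ) t ↔ ∃ u, L.Weak s ρ u ∧ L.Weak u σ t := by
  refine ⟨fun h => ?_, fun ⟨_, hρ, hσ⟩ => .comp hρ hσ⟩
  obtain ⟨τ, hτ, hvis⟩ := h.exists_trace
  obtain ⟨τ₁, τ₂, rfl, rfl, rfl⟩ := (List.reduceOption_eq_append_iff _ _ _).1 hvis
  obtain ⟨u, h₁, h₂⟩ := trace_append_iff.1 hτ
  exact ⟨u, h₁.weak, h₂.weak⟩

end Basic

section Norm

variable {S Act : Type*} (L : LTS S Act)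

/-- The states that `L` can reach from its initial state by the weak trace `ρ`, written `L after ρ`
in the testing literature: the state of `L.norm` reached by `ρ`. -/
def after (ρ : List Act) : Set S := {t | L.Weak L.init ρ t}

theorem after_append_singleton (ρ : List Act) (a : Act) :
    L.after (ρ ++ [a]) = {t | ∃ s ∈ L.after ρ, L.Weak s [a] t} :=
  Set.ext fun _ => weak_append_iff

theorem after_eq_empty_iff {ρ : List Act} : L.after ρ = ∅ ↔ ρ ∉ L.weaktraces :=
  Set.not_nonempty_iff_eq_empty.symm

theorem norm_tr_some_iff {U V : Set S} {a : Act} :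
    L.norm.tr U (some a) V ↔ V = {t | ∃ s ∈ U, L.Weak s [a] t} := by
  simp [norm]

theorem norm_trace_map_some_iff {ρ : List Act} {U : Set S} :
    L.norm.Trace L.norm.init (ρ.map some) U ↔ U = L.after ρ := by
  induction ρ using List.reverseRecOn generalizing U with
  | nil => exact trace_nil_iff.trans eq_comm
  | append_singleton ρ a ih =>
    simp only [List.map_append, List.map_cons, List.map_nil, trace_append_singleton_iff, ih,
      exists_eq_left, norm_tr_some_iff, after_append_singleton]

end Norm

section Prod

variable {S₁ S₂ Act : Type*} {L₁ : LTS S₁ Act} {L₂ : LTS S₂ Act} {s₁ t₁ : S₁} {s₂ t₂ : S₂}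

theorem prod_tr_none_iff :
    (L₁.prod L₂).tr (s₁, s₂) none (t₁, t₂) ↔ s₁ = t₁ ∧ L₂.tr s₂ none t₂ := by
  simp [prod, eq_comm]

theorem prod_tr_some_iff {a : Act} :
    (L₁.prod L₂).tr (s₁, s₂) (some a) (t₁, t₂) ↔
      L₁.tr s₁ (some a) t₁ ∧ L₂.tr s₂ (some a) t₂ := by
  simp [prod]

theorem prod_trace_iff {σ : List (Option Act)} :
    (L₁.prod L₂).Trace (s₁, s₂) σ (t₁, t₂) ↔
      L₁.Trace s₁ (σ.reduceOption.map some) t₁ ∧ L₂.Trace s₂ σ t₂ := by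
  induction σ using List.reverseRecOn generalizing t₁ t₂ with
  | nil => simp [trace_nil_iff]
  | append_singleton σ a ih =>
    cases a with
    | none =>
      simp only [trace_append_singleton_iff, Prod.exists, ih, prod_tr_none_iff,
        List.reduceOption_append, List.reduceOption_singleton, Option.toList_none, List.append_nil]
      grind
    | some a =>
      simp only [trace_append_singleton_iff, Prod.exists, ih, prod_tr_some_iff,
        List.reduceOption_append, List.reduceOption_singleton, Option.toList_some, List.map_append,
        List.map_cons, List.map_nil]
      grind

theorem prod_reachable_iff :
    (L₁.prod L₂).Reachable (t₁, t₂) ↔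
      ∃ ρ : List Act, L₁.Trace L₁.init (ρ.map some) t₁ ∧ L₂.Weak L₂.init ρ t₂ := by
  simp only [weak_iff_exists_trace]
  constructor
  · rintro ⟨σ, hσ⟩
    obtain ⟨h₁, h₂⟩ := prod_trace_iff.1 hσ
    exact ⟨σ.reduceOption, h₁, σ, h₂, rfl⟩
  · rintro ⟨_, h₁, σ, h₂, rfl⟩
    exact ⟨σ, prod_trace_iff.2 ⟨h₁, h₂⟩⟩

theorem norm_prod_reachable_iff {U : Set S₁} :
    (L₁.norm.prod L₂).Reachable (U, t₂) ↔
      ∃ ρ : List Act, U = L₁.after ρ ∧ L₂.Weak L₂.init ρ t₂ := by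
  simp only [prod_reachable_iff, norm_trace_map_some_iff]

end Prod

end LTS

/-- trace refinement holds iff no TR-witness is reachable in the
product of the normal form of the specification and the implementation. -/
theorem trace_refinement_iff {S₁ S₂ Act : Type*} (L₁ : LTS S₁ Act) (L₂ : LTS S₂ Act) :
    L₂.weaktraces ⊆ L₁.weaktraces ↔
      ¬ ∃ p : Set S₁ × S₂, ((L₁.norm).prod L₂).Reachable p ∧ TRwitness p := by
  have witness_iff : (∃ p : Set S₁ × S₂, (L₁.norm.prod L₂).Reachable p ∧ TRwitness p) ↔
      ∃ ρ ∈ L₂.weaktraces, ρ ∉ L₁.weaktraces := by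
    constructor
    · rintro ⟨⟨U, t⟩, hreach, hU : U = ∅⟩
      obtain ⟨ρ, hafter, ht⟩ := LTS.norm_prod_reachable_iff.1 hreach
      exact ⟨ρ, ⟨t, ht⟩, L₁.after_eq_empty_iff.1 (hafter.symm.trans hU)⟩
    · rintro ⟨ρ, ⟨t, ht⟩, hρ⟩
      exact ⟨(L₁.after ρ, t), LTS.norm_prod_reachable_iff.2 ⟨ρ, rfl, ht⟩,
        L₁.after_eq_empty_iff.2 hρ⟩
  rw [witness_iff, ← Set.not_subset, not_not]
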